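/- In the online Ramsey game with targets red C₄ and blue P₆, consider the position in which the five edges v₁v₂, v₂v₃, v₃v₄, v₄v₅, v₅v₆ of a path on six distinct vertices have been colored red, red, blue, red, blue respectively (case R6). From this position Builder can force a red copy of C₄ or a blue copy of P₆ within at most 6 additional rounds, so within at most 11 rounds in total. -/

import Mathlib

open SimpleGraph

/-- The set `S` of edges of the infinite complete graph on `ℕ` contains a copy of
the graph `G`: there is an injective map of the vertices of `G` into `ℕ` sending
every edge of `G` into `S`. -/
def HasCopy {V : Type*} (G : SimpleGraph V) (S : Set (Sym2 ℕ)) : Prop :=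
  ∃ f : V → ℕ, Function.Injective f ∧ ∀ a b, G.Adj a b → s(f a, f b) ∈ S

/-- `BuilderWinsIn G H R B r` means: in the online Ramsey game with targets a red copy
of `G` and a blue copy of `H`, from the position in which the edges in `R` have been
colored red and the edges in `B` have been colored blue, Builder has a strategy that
guarantees, against every Painter strategy, that within at most `r` further rounds the
colored edges contain a red copy of `G` or a blue copy of `H`.  (In each round Builder
chooses a previously unchosen non-loop edge of the infinite complete graph on `ℕ`, and
Painter immediately colors it red or blue; so Builder wins within `r + 1` rounds iff he
has already won, or he can choose an edge such that whichever color Painter gives it,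
he can win within `r` further rounds.) -/
def BuilderWinsIn {V W : Type*} (G : SimpleGraph V) (H : SimpleGraph W) :
    Set (Sym2 ℕ) → Set (Sym2 ℕ) → ℕ → Prop
  | R, B, 0 => HasCopy G R ∨ HasCopy H B
  | R, B, (r + 1) => HasCopy G R ∨ HasCopy H B ∨
      ∃ e : Sym2 ℕ, ¬ e.IsDiag ∧ e ∉ R ∧ e ∉ B ∧
        BuilderWinsIn G H (insert e R) B r ∧ BuilderWinsIn G H R (insert e B) r

/-- The online size Ramsey number `ř(G, H)`: the least `t` such that, starting from the
empty position, Builder can force a red copy of `G` or a blue copy of `H` within at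
most `t` rounds. -/
noncomputable def onlineRamsey {V W : Type*} (G : SimpleGraph V) (H : SimpleGraph W) : ℕ :=
  sInf {t | BuilderWinsIn G H ∅ ∅ t}

/-!
Builder wins from several positions that agree up to renaming vertices and adding coloured edges,
so positions are treated as patterns on seven abstract vertices `0, …, 6`, the vertex `i ≤ 5` being
`vᵢ₊₁` and `6` a new vertex. A move is forced when the other colour would complete a target.

Builder first plays `02`. If it is red, an outside vertex can send at most one red edge to the red
triangle `012`, and Builder plays `03`, `04`, `13` for as long as Painter answers blue. If it is
blue, he plays `13`. When that is blue too, the blue path `0-2-3-1` and the blue edge `45` force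
`04` and `14` to be red, then `03` must be blue and `24` completes a target. When it is red, `04` is
forced blue, which creates the blue path `3-2-0-4-5`, and Builder plays `03`. Up to the symmetry
exchanging `0` and `1`, all other lines of play reach one of three endgames in which every answer
to a free move wins for Builder after at most one forced move.
-/

section Game

variable {V W : Type*} {G : SimpleGraph V} {H : SimpleGraph W}
  {R R' B B' S T : Set (Sym2 ℕ)} {r : ℕ}

theorem HasCopy.mono (h : HasCopy G S) (hST : S ⊆ T) : HasCopy G T :=
  let ⟨f, hf, hS⟩ := h
  ⟨f, hf, fun a b hab ↦ hST (hS a b hab)⟩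

namespace BuilderWinsIn

theorem of_hasCopy_red (h : HasCopy G R) : BuilderWinsIn G H R B r := by
  cases r with
  | zero => exact Or.inl h
  | succ r => exact Or.inl h

theorem of_hasCopy_blue (h : HasCopy H B) : BuilderWinsIn G H R B r := by
  cases r with
  | zero => exact Or.inr h
  | succ r => exact Or.inr (Or.inl h)

theorem succ (h : BuilderWinsIn G H R B r) : BuilderWinsIn G H R B (r + 1) := by
  induction r generalizing R B with
  | zero => exact h.elim of_hasCopy_red of_hasCopy_blue
  | succ r ih =>
    obtain h | h | ⟨e, he, heR, heB, hred, hblue⟩ := h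
    · exact of_hasCopy_red h
    · exact of_hasCopy_blue h
    · exact Or.inr (Or.inr ⟨e, he, heR, heB, ih hred, ih hblue⟩)

/-- The edge `e` may already be coloured: Builder then simply skips the move. -/
theorem of_move {e : Sym2 ℕ} (he : ¬ e.IsDiag) (hred : BuilderWinsIn G H (insert e R) B r)
    (hblue : BuilderWinsIn G H R (insert e B) r) : BuilderWinsIn G H R B (r + 1) := by
  by_cases heR : e ∈ R
  · rw [Set.insert_eq_of_mem heR] at hred
    exact hred.succ
  by_cases heB : e ∈ B
  · rw [Set.insert_eq_of_mem heB] at hblue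
    exact hblue.succ
  exact Or.inr (Or.inr ⟨e, he, heR, heB, hred, hblue⟩)

theorem mono (h : BuilderWinsIn G H R B r) (hR : R ⊆ R') (hB : B ⊆ B') :
    BuilderWinsIn G H R' B' r := by
  induction r generalizing R R' B B' with
  | zero => exact h.imp (·.mono hR) (·.mono hB)
  | succ r ih =>
    obtain h | h | ⟨e, he, -, -, hred, hblue⟩ := h
    · exact of_hasCopy_red (h.mono hR)
    · exact of_hasCopy_blue (h.mono hB)
    · exact of_move he (ih hred (Set.insert_subset_insert hR) hB)
        (ih hblue hR (Set.insert_subset_insert hB))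

end BuilderWinsIn

end Game

section Pattern

variable {V W α β : Type*} {G : SimpleGraph V} {H : SimpleGraph W} {r : ℕ}

/-- The map `f` places a copy of `G` inside the edge set `S`. On finite types this is decidable,
unlike `HasCopy`. -/
def IsCopy (G : SimpleGraph V) (f : V → α) (S : Finset (Sym2 α)) : Prop :=
  Function.Injective f ∧ ∀ a b, G.Adj a b → s(f a, f b) ∈ S

instance [Fintype V] [DecidableEq V] [DecidableRel G.Adj] [DecidableEq α] (f : V → α)
    (S : Finset (Sym2 α)) : Decidable (IsCopy G f S) :=
  inferInstanceAs (Decidable (_ ∧ _))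

theorem IsCopy.hasCopy_image {f : V → α} {S : Finset (Sym2 α)} (h : IsCopy G f S) (w : α ↪ ℕ) :
    HasCopy G (Sym2.map w '' S) :=
  ⟨w ∘ f, w.injective.comp h.1, fun a b hab ↦ ⟨s(f a, f b), h.2 a b hab, rfl⟩⟩

/-- Builder wins within `r` rounds from the position with red edges `R` and blue edges `B`, where
the vertices in `α` stand for arbitrary distinct vertices of the board: the win is required for
every labelling of `α` by natural numbers. -/
def PatternWin (G : SimpleGraph V) (H : SimpleGraph W) (R B : Finset (Sym2 α)) (r : ℕ) : Prop :=
  ∀ w : α ↪ ℕ, BuilderWinsIn G H (Sym2.map w '' R) (Sym2.map w '' B) r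

namespace PatternWin

theorem relabel {R B : Finset (Sym2 α)} {R' B' : Finset (Sym2 β)} (h : PatternWin G H R B r)
    (σ : α ↪ β) (hR : ∀ e ∈ R, e.map σ ∈ R') (hB : ∀ e ∈ B, e.map σ ∈ B') :
    PatternWin G H R' B' r := by
  intro w
  have image_subset {S : Finset (Sym2 α)} {S' : Finset (Sym2 β)}
      (hS : ∀ e ∈ S, e.map σ ∈ S') : Sym2.map (σ.trans w) '' S ⊆ Sym2.map w '' S' := by
    rintro _ ⟨e, he, rfl⟩
    exact ⟨e.map σ, hS e he, Sym2.map_map e⟩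
  exact (h (σ.trans w)).mono (image_subset hR) (image_subset hB)

variable {R R' B B' : Finset (Sym2 α)}

theorem mono (h : PatternWin G H R B r) (hR : R ⊆ R') (hB : B ⊆ B') : PatternWin G H R' B' r :=
  fun w ↦ (h w).mono (Set.image_mono hR) (Set.image_mono hB)

theorem of_red (f : V → α) (hf : IsCopy G f R := by decide) : PatternWin G H R B r :=
  fun w ↦ .of_hasCopy_red (hf.hasCopy_image w)

theorem of_blue (f : W → α) (hf : IsCopy H f B := by decide) : PatternWin G H R B r :=
  fun w ↦ .of_hasCopy_blue (hf.hasCopy_image w)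

variable [DecidableEq α]

theorem of_move (e : Sym2 α) (hred : PatternWin G H (insert e R) B r)
    (hblue : PatternWin G H R (insert e B) r) (he : ¬ e.IsDiag := by decide) :
    PatternWin G H R B (r + 1) := by
  intro w
  have hred := hred w
  have hblue := hblue w
  rw [Finset.coe_insert, Set.image_insert_eq] at hred hblue
  exact .of_move (mt (Sym2.isDiag_map w.injective).1 he) hred hblue

theorem force_blue (e : Sym2 α) (f : V → α) (h : PatternWin G H R (insert e B) r)
    (hf : IsCopy G f (insert e R) := by decide) (he : ¬ e.IsDiag := by decide) :
    PatternWin G H R B (r + 1) :=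
  of_move e (of_red f hf) h he

theorem force_red (e : Sym2 α) (f : W → α) (h : PatternWin G H (insert e R) B r)
    (hf : IsCopy H f (insert e B) := by decide) (he : ¬ e.IsDiag := by decide) :
    PatternWin G H R B (r + 1) :=
  of_move e h (of_blue f hf) he

end PatternWin

end Pattern

section PositionR6

open PatternWin

instance (n : ℕ) : DecidableRel (pathGraph n).Adj :=
  fun _ _ ↦ decidable_of_iff' _ pathGraph_adj

theorem patternWin_red_spider_blue_path :
    PatternWin (α := Fin 7) (cycleGraph 4) (pathGraph 6)
      {s(0, 1), s(1, 2), s(1, 3), s(3, 4)} {s(2, 3), s(3, 0), s(0, 4), s(4, 5)} 2 :=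
  of_move s(0, 6)
    (force_blue s(2, 6) ![0, 6, 2, 1] (of_blue ![5, 4, 0, 3, 2, 6]))
    (force_blue s(2, 4) ![1, 3, 4, 2] (of_blue ![5, 4, 2, 3, 0, 6]))

theorem patternWin_red_paw_blue_path :
    PatternWin (α := Fin 7) (cycleGraph 4) (pathGraph 6)
      {s(0, 1), s(1, 3), s(3, 0), s(3, 4)} {s(3, 2), s(2, 0), s(0, 4), s(4, 5)} 2 :=
  of_move s(0, 5)
    (force_blue s(1, 5) ![0, 5, 1, 3] (of_blue ![1, 5, 4, 0, 2, 3]))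
    (force_blue s(1, 4) ![0, 3, 4, 1] (of_blue ![1, 4, 5, 0, 2, 3]))

theorem patternWin_red_path_two_blue_paths :
    PatternWin (α := Fin 7) (cycleGraph 4) (pathGraph 6)
      {s(0, 1), s(1, 2)} {s(0, 3), s(3, 2), s(1, 4), s(4, 5)} 2 :=
  of_move s(0, 5)
    (force_blue s(2, 5) ![0, 5, 2, 1] (of_blue ![0, 3, 2, 5, 4, 1]))
    (of_blue ![1, 4, 5, 0, 3, 2])

theorem patternWin_two_red_paths_two_blue_paths :
    PatternWin (α := Fin 7) (cycleGraph 4) (pathGraph 6)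
      {s(0, 1), s(1, 2), s(3, 4)} {s(0, 2), s(2, 3), s(3, 1), s(4, 5)} 4 :=
  force_red s(0, 4) ![1, 3, 2, 0, 4, 5] <|
  force_red s(1, 4) ![0, 2, 3, 1, 4, 5] <|
  force_blue s(0, 3) ![0, 3, 4, 1] <|
  force_blue s(2, 4) ![0, 4, 2, 1] <|
  of_blue ![1, 3, 0, 2, 4, 5]

theorem patternWin_red_triangle :
    PatternWin (α := Fin 7) (cycleGraph 4) (pathGraph 6)
      {s(0, 2), s(0, 1), s(1, 2), s(3, 4)} {s(2, 3), s(4, 5)} 5 := by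
  let swap : Fin 7 ↪ Fin 7 := (Equiv.swap 0 1).toEmbedding
  have of_03_red : PatternWin (α := Fin 7) (cycleGraph 4) (pathGraph 6)
      {s(0, 3), s(0, 2), s(0, 1), s(1, 2), s(3, 4)} {s(2, 3), s(4, 5)} 4 :=
    force_blue s(1, 3) ![0, 3, 1, 2] <|
    force_blue s(1, 4) ![0, 3, 4, 1] <|
    patternWin_red_spider_blue_path.relabel swap (by decide) (by decide)
  have of_04_red : PatternWin (α := Fin 7) (cycleGraph 4) (pathGraph 6)
      {s(0, 4), s(0, 2), s(0, 1), s(1, 2), s(3, 4)} {s(0, 3), s(2, 3), s(4, 5)} 3 :=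
    force_blue s(1, 4) ![0, 4, 1, 2] <|
    patternWin_red_path_two_blue_paths.mono (by decide) (by decide)
  have of_04_blue : PatternWin (α := Fin 7) (cycleGraph 4) (pathGraph 6)
      {s(0, 2), s(0, 1), s(1, 2), s(3, 4)} {s(0, 4), s(0, 3), s(2, 3), s(4, 5)} 3 :=
    of_move s(1, 3)
      (patternWin_red_spider_blue_path.mono (by decide) (by decide))
      (patternWin_red_path_two_blue_paths.relabel swap (by decide) (by decide))
  exact of_move s(0, 3) of_03_red (of_move s(0, 4) of_04_red of_04_blue)

theorem patternWin_blue_chord :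
    PatternWin (α := Fin 7) (cycleGraph 4) (pathGraph 6)
      {s(0, 1), s(1, 2), s(3, 4)} {s(0, 2), s(2, 3), s(4, 5)} 5 := by
  have of_13_red : PatternWin (α := Fin 7) (cycleGraph 4) (pathGraph 6)
      {s(1, 3), s(0, 1), s(1, 2), s(3, 4)} {s(0, 2), s(2, 3), s(4, 5)} 4 :=
    force_blue s(0, 4) ![0, 4, 3, 1] <|
    of_move s(0, 3)
      (patternWin_red_paw_blue_path.mono (by decide) (by decide))
      (patternWin_red_spider_blue_path.mono (by decide) (by decide))
  exact of_move s(1, 3) of_13_red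
    (patternWin_two_red_paths_two_blue_paths.mono (by decide) (by decide))

theorem patternWin_R6 :
    PatternWin (α := Fin 7) (cycleGraph 4) (pathGraph 6)
      {s(0, 1), s(1, 2), s(3, 4)} {s(2, 3), s(4, 5)} 6 :=
  of_move s(0, 2) patternWin_red_triangle patternWin_blue_chord

end PositionR6

/-- Case `R6`: in the online Ramsey game with targets red `C₄` and blue `P₆`,
from the position in which the five edges `v₁v₂, v₂v₃, v₃v₄, v₄v₅, v₅v₆` of a path on
six distinct vertices have been colored red, red, blue, red, blue respectively,
Builder can force a red copy of `C₄` or a blue copy of `P₆` within at most 6 additional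
rounds (so within at most 11 rounds in total). -/
theorem builder_wins_case_R6 (v : Fin 6 → ℕ) (hv : Function.Injective v) :
    BuilderWinsIn (cycleGraph 4) (pathGraph 6)
      {s(v 0, v 1), s(v 1, v 2), s(v 3, v 4)}
      {s(v 2, v 3), s(v 4, v 5)} 6 := by
  obtain ⟨z, hz⟩ := (Set.finite_range v).exists_notMem
  let w : Fin 7 ↪ ℕ := ⟨Fin.snoc v z, Fin.snoc_injective_iff.2 ⟨hv, hz⟩⟩
  have win := patternWin_R6 w
  simp only [Finset.coe_insert, Finset.coe_singleton, Set.image_insert_eq, Set.image_singleton,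
    Sym2.map_mk] at win
  exact win
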